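/- Let G be a connected simple graph on a finite vertex set V with |V| = n ≥ 2, with Laplacian matrix L, all-ones matrix J, and L† = (L + (1/n)J)⁻¹ − (1/n)J. For any two distinct vertices s, t with degrees d_s, d_t and b_st = e_s − e_t, the squared biharmonic distance satisfies β(s,t) = b_stᵀ (L†)² b_st ≥ (1/8)·(1/d_s + 1/d_t)². -/

import Mathlib

open Matrix

/-- The `n × n` all-ones matrix `J`. -/
def allOnes (V : Type*) [Fintype V] : Matrix V V ℝ := Matrix.of fun _ _ => 1

/-- The Moore–Penrose pseudoinverse of the Laplacian of `G`,
`L† = (L + (1/n)·J)⁻¹ - (1/n)·J`. -/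
noncomputable def lapPinv {V : Type*} [Fintype V] [DecidableEq V]
    (G : SimpleGraph V) [DecidableRel G.Adj] : Matrix V V ℝ :=
  (G.lapMatrix ℝ + ((Fintype.card V : ℝ))⁻¹ • allOnes V)⁻¹
    - ((Fintype.card V : ℝ))⁻¹ • allOnes V

/-- The vector `b_st = e_s - e_t`. -/
def bvec {V : Type*} [DecidableEq V] (s t : V) : V → ℝ :=
  Pi.single s 1 - Pi.single t 1

/-!
For a zero-sum vector `b`, `z = L† b` satisfies `L z = b` because `L L† = 1 - J/n`, and
`bᵀ (L†)² b = ‖z‖²` because `L†` is symmetric. Row `u` of `L` has squared norm `d_u (d_u + 1)`, at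
most `2 d_u²`, so Cauchy–Schwarz gives `(b_u / d_u)² ≤ 2 ‖z‖²`. For `b = b_st`, averaging this over
`u = s` and `u = t`, where `b_u² = 1`, yields the constant `1/8`.
-/

section Matrix

variable {V R : Type*} [Fintype V]

lemma dotProduct_mul_self_mulVec_of_isSymm [CommSemiring R] {A : Matrix V V R} (hA : A.IsSymm)
    (v : V → R) : v ⬝ᵥ ((A * A) *ᵥ v) = (A *ᵥ v) ⬝ᵥ (A *ᵥ v) := by
  rw [← mulVec_mulVec, dotProduct_mulVec, ← mulVec_transpose, hA.eq]

lemma sq_dotProduct_le [CommRing R] [LinearOrder R] [IsStrictOrderedRing R] (v w : V → R) :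
    (v ⬝ᵥ w) ^ 2 ≤ (v ⬝ᵥ v) * (w ⬝ᵥ w) := by
  simpa only [dotProduct, sq] using Finset.sum_mul_sq_le_sq_mul_sq Finset.univ v w

lemma isSymm_allOnes : (allOnes V).IsSymm := rfl

lemma allOnes_mulVec (v : V → ℝ) : allOnes V *ᵥ v = Function.const V (∑ i, v i) := by
  ext i
  simp [allOnes, mulVec, dotProduct]

lemma allOnes_mul_allOnes : allOnes V * allOnes V = (Fintype.card V : ℝ) • allOnes V := by
  ext i j
  simp [allOnes, mul_apply]

end Matrix

section Laplacian

variable {V R : Type*} [Fintype V] [DecidableEq V] (G : SimpleGraph V) [DecidableRel G.Adj]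

lemma lapMatrix_mul_self_apply_self [CommRing R] (u : V) :
    (G.lapMatrix R * G.lapMatrix R) u u = G.degree u * (G.degree u + 1) := by
  rw [SimpleGraph.lapMatrix, SimpleGraph.degMatrix, sub_mul, mul_sub, mul_sub]
  simp only [Matrix.sub_apply, diagonal_mul, mul_diagonal, diagonal_apply_eq,
    SimpleGraph.adjMatrix_mul_self_apply_self, SimpleGraph.adjMatrix_apply, SimpleGraph.irrefl,
    if_false]
  ring

lemma sq_lapMatrix_mulVec_apply_le [CommRing R] [LinearOrder R] [IsStrictOrderedRing R]
    (z : V → R) (u : V) :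
    ((G.lapMatrix R *ᵥ z) u) ^ 2 ≤ G.degree u * (G.degree u + 1) * (z ⬝ᵥ z) := by
  have row_dotProduct_self :
      G.lapMatrix R u ⬝ᵥ G.lapMatrix R u = G.degree u * (G.degree u + 1) :=
    calc G.lapMatrix R u ⬝ᵥ G.lapMatrix R u
        = (G.lapMatrix R * (G.lapMatrix R)ᵀ) u u := rfl
      _ = G.degree u * (G.degree u + 1) := by
        rw [(G.isSymm_lapMatrix R).eq, lapMatrix_mul_self_apply_self]
  rw [← row_dotProduct_self]
  exact sq_dotProduct_le (G.lapMatrix R u) z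

lemma sq_lapMatrix_mulVec_apply_div_degree_le [Field R] [LinearOrder R] [IsStrictOrderedRing R]
    (z : V → R) (u : V) :
    ((G.lapMatrix R *ᵥ z) u / G.degree u) ^ 2 ≤ 2 * (z ⬝ᵥ z) := by
  have normSq_nonneg : 0 ≤ z ⬝ᵥ z := Finset.sum_nonneg fun i _ => mul_self_nonneg (z i)
  have degree_le_sq : (G.degree u : R) ≤ G.degree u ^ 2 := by
    exact_mod_cast Nat.le_self_pow two_ne_zero (G.degree u)
  rw [div_pow]
  refine div_le_of_le_mul₀ (sq_nonneg _) (by positivity) ?_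
  calc ((G.lapMatrix R *ᵥ z) u) ^ 2
      ≤ G.degree u * (G.degree u + 1) * (z ⬝ᵥ z) := sq_lapMatrix_mulVec_apply_le G z u
    _ = (G.degree u ^ 2 + G.degree u) * (z ⬝ᵥ z) := by ring
    _ ≤ (G.degree u ^ 2 + G.degree u ^ 2) * (z ⬝ᵥ z) := by gcongr
    _ = 2 * (z ⬝ᵥ z) * G.degree u ^ 2 := by ring

lemma lapMatrix_mul_allOnes : G.lapMatrix ℝ * allOnes V = 0 := by
  ext i _
  exact congrFun G.lapMatrix_mulVec_const_eq_zero i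

lemma allOnes_mul_lapMatrix : allOnes V * G.lapMatrix ℝ = 0 := by
  simpa only [transpose_mul, isSymm_allOnes.eq, (G.isSymm_lapMatrix ℝ).eq, transpose_zero]
    using congrArg transpose (lapMatrix_mul_allOnes G)

lemma allOnes_mul_lapMatrix_add_smul_allOnes (c : ℝ) :
    allOnes V * (G.lapMatrix ℝ + c • allOnes V) = (c * Fintype.card V) • allOnes V := by
  rw [mul_add, allOnes_mul_lapMatrix, zero_add, mul_smul_comm, allOnes_mul_allOnes, smul_smul]

end Laplacian

section Pseudoinverse

variable {V : Type*} [Fintype V] [DecidableEq V] {G : SimpleGraph V} [DecidableRel G.Adj]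

lemma eq_zero_of_lapMatrix_mulVec_eq_zero (hconn : G.Preconnected) {v : V → ℝ}
    (hLv : G.lapMatrix ℝ *ᵥ v = 0) (hv : ∑ i, v i = 0) : v = 0 := by
  have v_const := G.lapMatrix_mulVec_eq_zero_iff_forall_reachable.mp hLv
  ext i
  have : Nonempty V := ⟨i⟩
  have card_mul_eq_zero : (Fintype.card V : ℝ) * v i = 0 := by
    rw [← hv, Finset.sum_congr rfl fun j _ => v_const j i (hconn j i)]
    simp
  exact (mul_eq_zero.mp card_mul_eq_zero).resolve_left (by simp)

lemma isUnit_lapMatrix_add_smul_allOnes (hconn : G.Connected) {c : ℝ} (hc : c ≠ 0) :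
    IsUnit (G.lapMatrix ℝ + c • allOnes V) := by
  have := hconn.nonempty
  rw [← mulVec_injective_iff_isUnit]
  refine (injective_iff_map_eq_zero (mulVecLin _)).mpr fun v hMv => ?_
  rw [mulVecLin_apply] at hMv
  have allOnes_mulVec_eq_zero : allOnes V *ᵥ v = 0 := by
    have smul_eq_zero_vec : (c * Fintype.card V) • (allOnes V *ᵥ v) = 0 := by
      rw [← smul_mulVec, ← allOnes_mul_lapMatrix_add_smul_allOnes G, ← mulVec_mulVec, hMv,
        mulVec_zero]
    exact (smul_eq_zero.mp smul_eq_zero_vec).resolve_left (by simp [hc])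
  have sum_eq_zero : ∑ i, v i = 0 := by
    simpa only [allOnes_mulVec, Function.const_apply, Pi.zero_apply]
      using congrFun allOnes_mulVec_eq_zero (Classical.arbitrary V)
  rw [add_mulVec, smul_mulVec, allOnes_mulVec_eq_zero, smul_zero, add_zero] at hMv
  exact eq_zero_of_lapMatrix_mulVec_eq_zero hconn.preconnected hMv sum_eq_zero

variable (G) in
lemma isSymm_lapPinv : (lapPinv G).IsSymm :=
  have symm_smul_allOnes := isSymm_allOnes.smul (Fintype.card V : ℝ)⁻¹
  ((G.isSymm_lapMatrix ℝ).add symm_smul_allOnes).inv.sub symm_smul_allOnes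

lemma lapMatrix_mul_lapPinv (hconn : G.Connected) :
    G.lapMatrix ℝ * lapPinv G = 1 - (Fintype.card V : ℝ)⁻¹ • allOnes V := by
  have := hconn.nonempty
  set c : ℝ := (Fintype.card V : ℝ)⁻¹ with hc
  set M := G.lapMatrix ℝ + c • allOnes V with hM
  have det_isUnit : IsUnit M.det :=
    (isUnit_iff_isUnit_det M).mp (isUnit_lapMatrix_add_smul_allOnes hconn (by simp [hc]))
  have allOnes_mul_inv : allOnes V * M⁻¹ = allOnes V := by
    have allOnes_mul : allOnes V * M = allOnes V := by
      rw [hM, allOnes_mul_lapMatrix_add_smul_allOnes, inv_mul_cancel₀ (by simp), one_smul]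
    rw [← allOnes_mul, mul_nonsing_inv_cancel_right _ _ det_isUnit, allOnes_mul]
  calc G.lapMatrix ℝ * lapPinv G
      = G.lapMatrix ℝ * M⁻¹ := by
        rw [lapPinv, mul_sub, mul_smul_comm, lapMatrix_mul_allOnes, smul_zero, sub_zero]
    _ = (M - c • allOnes V) * M⁻¹ := by rw [hM, add_sub_cancel_right]
    _ = 1 - c • allOnes V := by
        rw [sub_mul, mul_nonsing_inv M det_isUnit, smul_mul_assoc, allOnes_mul_inv]

lemma lapMatrix_mulVec_lapPinv_mulVec (hconn : G.Connected) {b : V → ℝ} (hb : ∑ i, b i = 0) :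
    G.lapMatrix ℝ *ᵥ (lapPinv G *ᵥ b) = b := by
  rw [mulVec_mulVec, lapMatrix_mul_lapPinv hconn, sub_mulVec, one_mulVec, smul_mulVec,
    allOnes_mulVec, hb, Function.const_zero, smul_zero, sub_zero]

lemma sq_apply_div_degree_le_dotProduct_lapPinv_mul_self (hconn : G.Connected) {b : V → ℝ}
    (hb : ∑ i, b i = 0) (u : V) :
    (b u / G.degree u) ^ 2 ≤ 2 * (b ⬝ᵥ ((lapPinv G * lapPinv G) *ᵥ b)) := by
  have row_bound := sq_lapMatrix_mulVec_apply_div_degree_le G (lapPinv G *ᵥ b) u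
  rwa [lapMatrix_mulVec_lapPinv_mulVec hconn hb,
    ← dotProduct_mul_self_mulVec_of_isSymm (isSymm_lapPinv G)] at row_bound

end Pseudoinverse

section VertexDifference

variable {V : Type*} [DecidableEq V]

lemma bvec_apply_left {s t : V} (hst : s ≠ t) : bvec s t s = 1 := by
  simp [bvec, hst]

lemma bvec_apply_right {s t : V} (hst : s ≠ t) : bvec s t t = -1 := by
  simp [bvec, hst.symm]

lemma sum_bvec [Fintype V] (s t : V) : ∑ i, bvec s t i = 0 := by
  simp [bvec]

end VertexDifference

/-- For a connected simple graph on `n ≥ 2` vertices and distinct vertices `s, t`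
with degrees `d_s, d_t`, the squared biharmonic distance
`β(s,t) = b_stᵀ (L†)² b_st` satisfies `β(s,t) ≥ (1/8)(1/d_s + 1/d_t)²`. -/
theorem biharmonic_ge_eighth_inv_degrees_sq {V : Type*} [Fintype V] [DecidableEq V]
    (G : SimpleGraph V) [DecidableRel G.Adj] (hconn : G.Connected)
    (hn : 2 ≤ Fintype.card V) (s t : V) (hst : s ≠ t) :
    (1 / 8) * (1 / (G.degree s : ℝ) + 1 / (G.degree t : ℝ)) ^ 2 ≤
      bvec s t ⬝ᵥ ((lapPinv G * lapPinv G) *ᵥ bvec s t) := by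
  have bound_s := sq_apply_div_degree_le_dotProduct_lapPinv_mul_self hconn (sum_bvec s t) s
  have bound_t := sq_apply_div_degree_le_dotProduct_lapPinv_mul_self hconn (sum_bvec s t) t
  rw [bvec_apply_left hst] at bound_s
  rw [bvec_apply_right hst, neg_div, neg_sq] at bound_t
  have add_sq := add_sq_le (a := 1 / (G.degree s : ℝ)) (b := 1 / (G.degree t : ℝ))
  linarith
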